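/- arXiv:2111.04360 — 3 statements merged into one kernel-verified Lean document; each statement's English description precedes it below -/
import Mathlib

section
/- Let u : ℝ → ℝ be twice continuously differentiable on [0,1] with u(0) = u(1) = 0. Then for every x ∈ [0,1], |u(x)| ≤ (1/4)∫₀¹ |u''(s)| ds. -/
/-!
For `0 < x < 1`, the mean value theorem on `[0, x]` and `[x, 1]` gives `a < x < b` with
`u x = x * u' a` and `-u x = (1 - x) * u' b`. Hence `u x = -x (1 - x) (u' b - u' a)`, and
`|u' b - u' a| = |∫ₐᵇ u''| ≤ ∫₀¹ |u''|`, while `x (1 - x) ≤ 1/4`.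
-/

/-- If `u : ℝ → ℝ` is twice continuously differentiable on `[0,1]` with `u 0 = u 1 = 0`,
then `|u x| ≤ (1/4) ∫₀¹ |u''(s)| ds` for every `x ∈ [0,1]`. -/
theorem abs_le_quarter_integral_abs_second_deriv (u u' u'' : ℝ → ℝ)
    (hd1 : ∀ t ∈ Set.Icc (0:ℝ) 1, HasDerivWithinAt u (u' t) (Set.Icc (0:ℝ) 1) t)
    (hd2 : ∀ t ∈ Set.Icc (0:ℝ) 1, HasDerivWithinAt u' (u'' t) (Set.Icc (0:ℝ) 1) t)
    (hcont : ContinuousOn u'' (Set.Icc (0:ℝ) 1))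
    (h0 : u 0 = 0) (h1 : u 1 = 0) :
    ∀ x ∈ Set.Icc (0:ℝ) 1, |u x| ≤ (1/4) * ∫ s in (0:ℝ)..1, |u'' s| := by
  rintro x ⟨hx0, hx1⟩
  have hI : 0 ≤ ∫ s in (0:ℝ)..1, |u'' s| :=
    intervalIntegral.integral_nonneg zero_le_one fun s _ => abs_nonneg _
  rcases hx0.eq_or_lt with rfl | hx0
  · rw [h0, abs_zero]; positivity
  rcases hx1.eq_or_lt with rfl | hx1
  · rw [h1, abs_zero]; positivity
  have hu : ContinuousOn u (Set.Icc 0 1) := fun t ht => (hd1 t ht).continuousWithinAt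
  have hdu : ∀ t, 0 < t → t < 1 → HasDerivAt u (u' t) t := fun t h h' =>
    (hd1 t ⟨h.le, h'.le⟩).hasDerivAt (Icc_mem_nhds h h')
  have hdu' : ∀ t, 0 < t → t < 1 → HasDerivAt u' (u'' t) t := fun t h h' =>
    (hd2 t ⟨h.le, h'.le⟩).hasDerivAt (Icc_mem_nhds h h')
  obtain ⟨a, ⟨ha0, hax⟩, ha⟩ := exists_hasDerivAt_eq_slope u u' hx0
    (hu.mono (Set.Icc_subset_Icc_right hx1.le)) fun t ht => hdu t ht.1 (ht.2.trans hx1)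
  obtain ⟨b, ⟨hxb, hb1⟩, hb⟩ := exists_hasDerivAt_eq_slope u u' hx1
    (hu.mono (Set.Icc_subset_Icc_left hx0.le)) fun t ht => hdu t (hx0.trans ht.1) ht.2
  have hab : a ≤ b := (hax.trans hxb).le
  have hsub : Set.Icc a b ⊆ Set.Icc 0 1 := Set.Icc_subset_Icc ha0.le hb1.le
  have hftc : ∫ s in a..b, u'' s = u' b - u' a := by
    refine intervalIntegral.integral_eq_sub_of_hasDerivAt (fun t ht => ?_)
      ((hcont.mono hsub).intervalIntegrable_of_Icc hab)
    rw [Set.uIcc_of_le hab] at ht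
    exact hdu' t (ha0.trans_le ht.1) (ht.2.trans_lt hb1)
  have hbound : |u' b - u' a| ≤ ∫ s in (0:ℝ)..1, |u'' s| := by
    rw [← hftc]
    refine (intervalIntegral.abs_integral_le_integral_abs hab).trans ?_
    exact intervalIntegral.integral_mono_interval ha0.le hab hb1.le
      (Filter.Eventually.of_forall fun s => abs_nonneg _)
      (hcont.abs.intervalIntegrable_of_Icc zero_le_one)
  have hx1' : 0 < 1 - x := sub_pos.2 hx1
  have hrep : u x = -(x * (1 - x) * (u' b - u' a)) := by
    rw [ha, hb, h0, h1]
    field_simp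
    ring
  rw [hrep, abs_neg, abs_mul, abs_of_pos (mul_pos hx0 hx1')]
  exact mul_le_mul (by nlinarith [sq_nonneg (x - 1/2)]) hbound (abs_nonneg _) (by norm_num)
end

section
/- Let p ≥ 1 be a real number and let u : ℝ → ℝ be twice continuously differentiable on [0,1] with u(0) = u(1) = 0. Then for every x ∈ [0,1], |u(x)| ≤ (1/4)·(∫₀¹ |u''(s)|^p ds)^{1/p}. -/
/-!
Integrating `(s u' - u)' = s u''` over `[0,x]` and `((1-s) u' + u)' = (1-s) u''` over `[x,1]`, and
eliminating `u' x`, gives the Green's function representation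
`-u x = (1-x) ∫₀ˣ s u''(s) ds + x ∫ₓ¹ (1-s) u''(s) ds`.
The kernel is at most `x (1-x) ≤ 1/4`, so `|u x| ≤ (1/4) ∫₀¹ |u''|`. Jensen's inequality for
`t ↦ t^p` on the probability space `(0,1]` bounds the `L¹` norm by the `L^p` norm.
-/

open MeasureTheory Set in
/-- On `[0,1]`, which has measure one, the `L¹` norm is at most the `L^p` norm. -/
lemma integral_abs_le_Lp_norm (p : ℝ) (hp : 1 ≤ p) (f : ℝ → ℝ)
    (hf : ContinuousOn f (Icc (0:ℝ) 1)) :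
    ∫ s in (0:ℝ)..1, |f s| ≤ (∫ s in (0:ℝ)..1, |f s| ^ p) ^ (1/p) := by
  have hp0 : 0 < p := by linarith
  have hprob : IsProbabilityMeasure (volume.restrict (Ioc (0:ℝ) 1)) := ⟨by simp⟩
  have hcp : ContinuousOn (fun s => |f s| ^ p) (Icc (0:ℝ) 1) :=
    hf.abs.rpow_const fun _ _ => Or.inr hp0.le
  have hi : IntegrableOn (fun s => |f s|) (Ioc (0:ℝ) 1) :=
    hf.abs.integrableOn_Icc.mono_set Ioc_subset_Icc_self
  have hip : IntegrableOn (fun s => |f s| ^ p) (Ioc (0:ℝ) 1) :=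
    hcp.integrableOn_Icc.mono_set Ioc_subset_Icc_self
  have hJ := (convexOn_rpow hp).map_integral_le (μ := volume.restrict (Ioc (0:ℝ) 1))
    (f := fun s => |f s|) (Real.continuous_rpow_const hp0.le).continuousOn isClosed_Ici
    (Filter.Eventually.of_forall fun s => abs_nonneg (f s)) hi hip
  rw [intervalIntegral.integral_of_le zero_le_one, intervalIntegral.integral_of_le zero_le_one,
    one_div, Real.le_rpow_inv_iff_of_pos (integral_nonneg fun s => abs_nonneg _)
      (integral_nonneg fun s => by positivity) hp0]
  exact hJ

open MeasureTheory Set in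
/-- A weight bounded by `c` contributes at most the factor `c`. -/
lemma abs_integral_mul_le (w f : ℝ → ℝ) (a b c : ℝ) (hab : a ≤ b)
    (hw : ∀ s ∈ Icc a b, |w s| ≤ c) (hf : ContinuousOn f (Icc a b)) :
    |∫ s in a..b, w s * f s| ≤ c * ∫ s in a..b, |f s| := by
  rw [← intervalIntegral.integral_const_mul, ← Real.norm_eq_abs]
  refine intervalIntegral.norm_integral_le_of_norm_le hab ?_ ?_
  · refine Filter.Eventually.of_forall fun s hs => ?_
    rw [Real.norm_eq_abs, abs_mul]
    exact mul_le_mul_of_nonneg_right (hw s (Ioc_subset_Icc_self hs)) (abs_nonneg _)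
  · exact (continuousOn_const.mul hf.abs).intervalIntegrable_of_Icc hab

/-- If `p ≥ 1` and `u : ℝ → ℝ` is twice continuously differentiable on `[0,1]` with
`u 0 = u 1 = 0`, then `|u x| ≤ (1/4) (∫₀¹ |u''(s)|^p ds)^(1/p)` for every `x ∈ [0,1]`. -/
theorem abs_le_quarter_Lp_norm_second_deriv (p : ℝ) (hp : 1 ≤ p) (u u' u'' : ℝ → ℝ)
    (hd1 : ∀ t ∈ Set.Icc (0:ℝ) 1, HasDerivWithinAt u (u' t) (Set.Icc (0:ℝ) 1) t)
    (hd2 : ∀ t ∈ Set.Icc (0:ℝ) 1, HasDerivWithinAt u' (u'' t) (Set.Icc (0:ℝ) 1) t)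
    (hcont : ContinuousOn u'' (Set.Icc (0:ℝ) 1))
    (h0 : u 0 = 0) (h1 : u 1 = 0) :
    ∀ x ∈ Set.Icc (0:ℝ) 1,
      |u x| ≤ (1/4) * (∫ s in (0:ℝ)..1, |u'' s| ^ p) ^ (1/p) := by
  intro x hx
  obtain ⟨hx0, hx1⟩ := hx
  have hsub0 : Set.Icc 0 x ⊆ Set.Icc (0:ℝ) 1 := Set.Icc_subset_Icc_right hx1
  have hsub1 : Set.Icc x 1 ⊆ Set.Icc (0:ℝ) 1 := Set.Icc_subset_Icc_left hx0
  have hcu : ContinuousOn u (Set.Icc (0:ℝ) 1) := fun t ht => (hd1 t ht).continuousWithinAt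
  have hcu' : ContinuousOn u' (Set.Icc (0:ℝ) 1) := fun t ht => (hd2 t ht).continuousWithinAt
  have hD1 : ∀ t ∈ Set.Ioo (0:ℝ) 1, HasDerivAt u (u' t) t := fun t ht =>
    (hd1 t (Set.Ioo_subset_Icc_self ht)).hasDerivAt (Icc_mem_nhds ht.1 ht.2)
  have hD2 : ∀ t ∈ Set.Ioo (0:ℝ) 1, HasDerivAt u' (u'' t) t := fun t ht =>
    (hd2 t (Set.Ioo_subset_Icc_self ht)).hasDerivAt (Icc_mem_nhds ht.1 ht.2)
  have hA : ∫ s in (0:ℝ)..x, s * u'' s = x * u' x - u x := by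
    rw [intervalIntegral.integral_eq_sub_of_hasDerivAt_of_le hx0
      (f := fun s => s * u' s - u s)]
    · simp [h0]
    · exact ((continuousOn_id.mul hcu').sub hcu).mono hsub0
    · intro t ht
      have ht' : t ∈ Set.Ioo (0:ℝ) 1 := ⟨ht.1, ht.2.trans_le hx1⟩
      exact (((hasDerivAt_id t).mul (hD2 t ht')).sub (hD1 t ht')).congr_deriv (by simp)
    · exact ((continuousOn_id.mul hcont).mono hsub0).intervalIntegrable_of_Icc hx0
  have hB : ∫ s in x..1, (1 - s) * u'' s = -((1 - x) * u' x) - u x := by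
    rw [intervalIntegral.integral_eq_sub_of_hasDerivAt_of_le hx1
      (f := fun s => (1 - s) * u' s + u s)]
    · simp only [h1]
      ring
    · exact (((continuousOn_const.sub continuousOn_id).mul hcu').add hcu).mono hsub1
    · intro t ht
      have ht' : t ∈ Set.Ioo (0:ℝ) 1 := ⟨hx0.trans_lt ht.1, ht.2⟩
      exact ((((hasDerivAt_id t).const_sub 1).mul (hD2 t ht')).add (hD1 t ht')).congr_deriv
        (by simp only [id]; ring)
    · exact (((continuousOn_const.sub continuousOn_id).mul hcont).mono
        hsub1).intervalIntegrable_of_Icc hx1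
  have hA' := abs_integral_mul_le (fun s => s) u'' 0 x x hx0
    (fun s hs => by rw [abs_of_nonneg hs.1]; exact hs.2) (hcont.mono hsub0)
  have hB' := abs_integral_mul_le (fun s => 1 - s) u'' x 1 (1 - x) hx1
    (fun s hs => by rw [abs_of_nonneg (by linarith [hs.2])]; linarith [hs.1]) (hcont.mono hsub1)
  have hadd : (∫ s in (0:ℝ)..x, |u'' s|) + ∫ s in x..1, |u'' s| = ∫ s in (0:ℝ)..1, |u'' s| :=
    intervalIntegral.integral_add_adjacent_intervals
      ((hcont.mono hsub0).abs.intervalIntegrable_of_Icc hx0)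
      ((hcont.mono hsub1).abs.intervalIntegrable_of_Icc hx1)
  have hpos : 0 ≤ ∫ s in (0:ℝ)..1, |u'' s| :=
    intervalIntegral.integral_nonneg zero_le_one fun s _ => abs_nonneg _
  have hrep : u x = -((1 - x) * (∫ s in (0:ℝ)..x, s * u'' s)
      + x * ∫ s in x..1, (1 - s) * u'' s) := by
    rw [hA, hB]
    ring
  have hx1' : 0 ≤ 1 - x := by linarith
  calc |u x| ≤ (1 - x) * |∫ s in (0:ℝ)..x, s * u'' s|
        + x * |∫ s in x..1, (1 - s) * u'' s| := by
        rw [hrep, abs_neg]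
        refine (abs_add_le _ _).trans_eq ?_
        rw [abs_mul, abs_mul, abs_of_nonneg hx0, abs_of_nonneg hx1']
    _ ≤ (1 - x) * (x * ∫ s in (0:ℝ)..x, |u'' s|)
        + x * ((1 - x) * ∫ s in x..1, |u'' s|) := by gcongr
    _ = x * (1 - x) * ∫ s in (0:ℝ)..1, |u'' s| := by
        rw [← hadd]
        ring
    _ ≤ (1/4) * ∫ s in (0:ℝ)..1, |u'' s| := by
        gcongr
        nlinarith [sq_nonneg (x - 1/2)]
    _ ≤ (1/4) * (∫ s in (0:ℝ)..1, |u'' s| ^ p) ^ (1/p) := by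
        gcongr
        exact integral_abs_le_Lp_norm p hp u'' hcont
end

section
/- Let X be a real Banach space in which every bounded sequence has a weakly convergent subsequence (a subsequence (x_{n_k}) and x ∈ X with φ(x_{n_k}) → φ(x) for every continuous linear functional φ on X). Let Φ, Ψ : X → ℝ be functions and Φ', Ψ' : X → X* continuous maps into the topological dual X* such that, for all u, v ∈ X, the Gâteaux derivatives exist: lim_{t→0} (Φ(u+tv) − Φ(u))/t = Φ'(u)(v) and lim_{t→0} (Ψ(u+tv) − Ψ(u))/t = Ψ'(u)(v). Assume: (i) Φ is coercive (Φ(u) → +∞ as ‖u‖ → ∞); (ii) Φ is sequentially weakly lower semicontinuous (if φ(u_n) → φ(u) for all φ ∈ X*, then Φ(u) ≤ liminf Φ(u_n)); (iii) Φ' is a bijection from X onto X* whose inverse is continuous; (iv) Ψ' is compact (it maps bounded subsets of X to subsets of X* with compact closure); (v) inf_{x∈X} Φ(x) = Φ(0) = Ψ(0) = 0; (vi) there exist r > 0 and x̄ ∈ X with r < Φ(x̄) and sup_{Φ(x)≤r} Ψ(x) / r < Ψ(x̄)/Φ(x̄); and (vii) for each λ in the interval Λ_r = ( Φ(x̄)/Ψ(x̄)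 , r / sup_{Φ(x)≤r} Ψ(x) ), the functional Φ − λΨ is coercive. Then for each λ ∈ Λ_r there exist at least three distinct points u ∈ X with Φ'(u) = λΨ'(u). -/
open Filter Bornology

open Topology Set

/-!
Fix `lam` in the interval, let `S = sup_{Φ ≤ r} Ψ` and `J = Φ - lam Ψ`. The choice of `lam` says that
`J xb < 0` and `lam S < r`, so `J ≥ r - lam S > 0` on the level set `Φ = r`, while `J 0 = 0` with
`Φ 0 < r` and `J xb < 0` with `Φ xb > r`. The level set is thus a barrier separating `0` from `xb`.

Since `Ψ'` is compact, `Ψ` is bounded on bounded sets, and coercivity of `J` makes it bounded below.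
Moreover `J` satisfies the Palais–Smale condition: a sequence `y n` with `J (y n)` bounded above and
`J' (y n) → 0` is bounded, so `Ψ' (y n)`, therefore `Φ' (y n)`, therefore `y n` (the inverse of `Φ'`
being continuous) converges along a subsequence. Points with arbitrarily small `J'` in a closed set on
which `J` is bounded above thus yield a critical point in that set. They are found three times:

* in `{Φ ≤ r} ∩ {J ≤ 0}` and in `{Φ ≥ r} ∩ {J ≤ J xb}`, by Ekeland's principle
  (`exists_almost_critical_of_barrier`): the barrier keeps the almost minimizers off the boundary;
* in `{J ≥ r - lam S}`, by the mountain pass argument (`exists_almost_critical_of_pass`): every path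
  from `0` to `xb` crosses the barrier.

The first two critical points have `J ≤ 0`, hence lie strictly on different sides of the barrier, and
the third has `J > 0`.
-/

/-! ### Ekeland's variational principle -/

/-- Ekeland's variational principle on a closed subset `K` of a complete metric space: a lower
semicontinuous function bounded below on `K` admits, below any starting point, a point that is
minimal on `K` up to the slope `ε`. -/
theorem ekeland_principle {M : Type*} [MetricSpace M] [CompleteSpace M] {K : Set M}
    (hK : IsClosed K) {f : M → ℝ} (hf : LowerSemicontinuous f) {c : ℝ}
    (hc : ∀ x ∈ K, c ≤ f x) {ε : ℝ} (hε : 0 < ε) {x₀ : M} (hx₀ : x₀ ∈ K) :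
    ∃ y ∈ K, f y ≤ f x₀ ∧ ∀ z ∈ K, f y ≤ f z + ε * dist y z := by
  -- The relation `z ∈ S x` is a partial order on `K`; the point sought is a minimal element.
  set S : M → Set M := fun x => {z | z ∈ K ∧ f z + ε * dist x z ≤ f x} with hS
  have hself : ∀ x ∈ K, x ∈ S x := fun x hx => ⟨hx, by simp⟩
  have htrans : ∀ x y, y ∈ S x → S y ⊆ S x := by
    rintro x y ⟨_, hy⟩ z ⟨hzK, hz⟩
    refine ⟨hzK, ?_⟩
    nlinarith [dist_triangle x y z]
  have hclosed : ∀ x, IsClosed (S x) := by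
    intro x
    have h1 : LowerSemicontinuous fun z => f z + ε * dist x z :=
      hf.add (Continuous.lowerSemicontinuous (by fun_prop))
    exact hK.inter (h1.isClosed_preimage (f x))
  have hstep : ∀ (n : ℕ) (x : K), ∃ y : K, (y : M) ∈ S x ∧
      ∀ z ∈ S x, f y ≤ f z + (1 / 2 : ℝ) ^ n := by
    intro n x
    have hne : (f '' S x).Nonempty := ⟨_, mem_image_of_mem f (hself x x.2)⟩
    have hbdd : BddBelow (f '' S x) := ⟨c, by rintro _ ⟨z, hz, rfl⟩; exact hc z hz.1⟩
    obtain ⟨_, ⟨y, hy, rfl⟩, hlt⟩ := exists_lt_of_csInf_lt hne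
      (show sInf (f '' S x) < sInf (f '' S x) + (1 / 2 : ℝ) ^ n by
        have : (0 : ℝ) < (1 / 2) ^ n := by positivity
        linarith)
    refine ⟨⟨y, hy.1⟩, hy, fun z hz => ?_⟩
    have := csInf_le hbdd (mem_image_of_mem f hz)
    simp only
    linarith
  choose nx hnx1 hnx2 using hstep
  obtain ⟨u, hu0, hu⟩ : ∃ u : ℕ → K, u 0 = ⟨x₀, hx₀⟩ ∧ ∀ n, u (n + 1) = nx n (u n) :=
    ⟨fun n => Nat.rec ⟨x₀, hx₀⟩ nx n, rfl, fun _ => rfl⟩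
  have hmem : ∀ n m : ℕ, n ≤ m → (u m).1 ∈ S (u n).1 := by
    intro n m hnm
    induction m, hnm using Nat.le_induction with
    | base => exact hself _ (u n).2
    | succ m _ ih => exact htrans _ _ ih (by rw [hu]; exact hnx1 m (u m))
  have hsmall : ∀ n, ∀ z ∈ S (u (n + 1)), dist (u (n + 1) : M) z ≤ (1 / 2 : ℝ) ^ n / ε := by
    intro n z hz
    have h1 := hnx2 n (u n) z (htrans _ _ (hmem n (n + 1) n.le_succ) hz)
    rw [← hu] at h1
    have h2 := hz.2
    rw [le_div_iff₀ hε]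
    linarith
  have hlim0 : Tendsto (fun n : ℕ => (1 / 2 : ℝ) ^ n / ε) atTop (𝓝 0) := by
    simpa using (tendsto_pow_atTop_nhds_zero_of_lt_one
      (by norm_num : (0 : ℝ) ≤ 1 / 2) (by norm_num)).div_const ε
  obtain ⟨y, hy⟩ := cauchySeq_tendsto_of_complete
    (cauchySeq_of_le_tendsto_0' (s := fun n => (u (n + 1) : M)) _
      (fun n m hnm => hsmall n _ (hmem (n + 1) (m + 1) (by omega))) hlim0)
  have hyS : ∀ n, y ∈ S (u n) := by
    intro n
    refine (hclosed _).mem_of_tendsto hy ?_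
    filter_upwards [eventually_ge_atTop n] with m hm
    exact hmem n (m + 1) (by omega)
  refine ⟨y, (hyS 0).1, ?_, fun z hz => ?_⟩
  · have h := (hyS 0).2
    have : 0 ≤ ε * dist (u 0 : M) y := by positivity
    simp only [hu0] at h this
    linarith
  · by_contra! hlt
    have hzS : ∀ n, z ∈ S (u n) := fun n => htrans _ _ (hyS n) ⟨hz, hlt.le⟩
    have hz0 : Tendsto (fun n => (u (n + 1) : M)) atTop (𝓝 z) :=
      tendsto_iff_dist_tendsto_zero.2
        (squeeze_zero (fun _ => dist_nonneg) (fun n => hsmall n z (hzS _)) hlim0)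
    have := tendsto_nhds_unique hy hz0
    subst this
    simp at hlt

/-! ### Functions with a continuous Gâteaux derivative -/

section Gateaux

variable {X : Type*} [NormedAddCommGroup X] [NormedSpace ℝ X] {G : X → ℝ} {G' : X → X →L[ℝ] ℝ}

theorem hasDerivAt_along_line (hG : ∀ u v, HasLineDerivAt ℝ G (G' u v) u v) (u v : X) (t : ℝ) :
    HasDerivAt (fun s : ℝ => G (u + s • v)) (G' (u + t • v) v) t := by
  have h := hG (u + t • v) v
  unfold HasLineDerivAt at h
  have h2 := HasDerivAt.comp_sub_const (x := t) (a := t) (by simpa using h)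
  refine h2.congr_of_eventuallyEq (Eventually.of_forall fun s => ?_)
  simp only [add_assoc, ← add_smul]
  congr 3
  ring

theorem abs_sub_le_of_gateaux_bound (hG : ∀ u v, HasLineDerivAt ℝ G (G' u v) u v)
    {B : Set X} (hB : Convex ℝ B) {C : ℝ} (hC : ∀ x ∈ B, ‖G' x‖ ≤ C) {x y : X}
    (hx : x ∈ B) (hy : y ∈ B) : |G y - G x| ≤ C * ‖y - x‖ := by
  have h := norm_image_sub_le_of_norm_deriv_le_segment_01'
    (f := fun s : ℝ => G (x + s • (y - x))) (f' := fun s => G' (x + s • (y - x)) (y - x))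
    (C := C * ‖y - x‖)
    (fun t _ => (hasDerivAt_along_line hG x (y - x) t).hasDerivWithinAt)
    (fun t ht => ((G' _).le_opNorm _).trans (mul_le_mul_of_nonneg_right
      (hC _ (hB.add_smul_sub_mem hx hy ⟨ht.1, ht.2.le⟩)) (norm_nonneg _)))
  simpa using h

/-- A Gâteaux differentiable function with norm-continuous derivative is locally Lipschitz, since
the derivative is locally bounded. -/
theorem continuous_of_gateaux (hG : ∀ u v, HasLineDerivAt ℝ G (G' u v) u v)
    (hG' : Continuous G') : Continuous G := by
  rw [continuous_iff_continuousAt]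
  intro x
  have h1 : ∀ᶠ y in 𝓝 x, ‖G' y‖ < ‖G' x‖ + 1 :=
    hG'.norm.continuousAt.eventually_lt continuousAt_const (by simp)
  obtain ⟨δ, hδ, hball⟩ := Metric.eventually_nhds_iff_ball.1 h1
  have hx := Metric.mem_ball_self (x := x) hδ
  rw [ContinuousAt, tendsto_iff_norm_sub_tendsto_zero]
  refine squeeze_zero' (Eventually.of_forall fun _ => norm_nonneg _)
    (g := fun y => (‖G' x‖ + 1) * ‖y - x‖) ?_ ?_
  · filter_upwards [Metric.ball_mem_nhds x hδ] with y hy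
    exact abs_sub_le_of_gateaux_bound hG (convex_ball x δ) (fun z hz => (hball z hz).le) hx hy
  · have : Continuous fun y => (‖G' x‖ + 1) * ‖y - x‖ := by fun_prop
    simpa using this.tendsto x

/-- The slope condition delivered by Ekeland's principle, when it holds in a full neighbourhood,
bounds the derivative. -/
theorem norm_deriv_le_of_almost_min (hG : ∀ u v, HasLineDerivAt ℝ G (G' u v) u v) {y : X}
    {ε : ℝ} (hε : 0 ≤ ε) (h : ∀ᶠ z in 𝓝 y, G y ≤ G z + ε * dist y z) : ‖G' y‖ ≤ ε := by
  have key : ∀ v, -(ε * ‖v‖) ≤ G' y v := by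
    intro v
    have h1 := (hG y v).tendsto_slope_zero_right
    refine ge_of_tendsto h1 ?_
    have hc : Tendsto (fun t : ℝ => y + t • v) (𝓝[>] 0) (𝓝 y) := by
      have : Continuous fun t : ℝ => y + t • v := by fun_prop
      simpa using (this.tendsto 0).mono_left nhdsWithin_le_nhds
    filter_upwards [hc.eventually h, self_mem_nhdsWithin] with t ht ht0
    have ht0 : 0 < t := ht0
    simp only [dist_self_add_right, norm_smul, Real.norm_eq_abs, abs_of_pos ht0] at ht
    simp only [smul_eq_mul]
    rw [inv_mul_eq_div, le_div_iff₀ ht0]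
    linarith
  refine ContinuousLinearMap.opNorm_le_bound _ hε fun v => abs_le.2 ⟨key v, ?_⟩
  have := key (-v)
  simp only [norm_neg, map_neg] at this
  linarith

/-- If no point of the sublevel set of `G x₀` in `K` lies on the boundary of `K`, Ekeland's
principle on `K` produces points of that sublevel set with arbitrarily small derivative. -/
theorem exists_almost_critical_of_barrier [CompleteSpace X]
    (hG : ∀ u v, HasLineDerivAt ℝ G (G' u v) u v) (hG' : Continuous G') {K : Set X}
    (hK : IsClosed K) {c : ℝ} (hc : ∀ x ∈ K, c ≤ G x) {x₀ : X} (hx₀ : x₀ ∈ K)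
    (hint : ∀ x ∈ K, G x ≤ G x₀ → K ∈ 𝓝 x) {ε : ℝ} (hε : 0 < ε) :
    ∃ y ∈ K ∩ {y | G y ≤ G x₀}, ‖G' y‖ ≤ ε := by
  obtain ⟨y, hyK, hy, hmin⟩ := ekeland_principle hK
    (continuous_of_gateaux hG hG').lowerSemicontinuous hc hε hx₀
  exact ⟨y, ⟨hyK, hy⟩, norm_deriv_le_of_almost_min hG hε.le
    (mem_of_superset (hint y hyK hy) hmin)⟩

/-- Mountain pass: if every path from `a` to `b` reaches the level `m`, strictly above `G a` and
`G b`, then there are points of level in `[m, C]` with arbitrarily small derivative. Ekeland's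
principle is applied to `γ ↦ max G ∘ γ` on the complete space of paths from `a` to `b`; if `G'` were
large at every maximum point of the almost minimal path `γ`, then `γ` could be pushed down along a
continuous field of descent directions faster than the principle permits. -/
theorem exists_almost_critical_of_pass [CompleteSpace X]
    (hG : ∀ u v, HasLineDerivAt ℝ G (G' u v) u v) (hG' : Continuous G') {a b : X} {m : ℝ}
    (ha : G a < m) (hb : G b < m)
    (hpath : ∀ γ : C(unitInterval, X), γ 0 = a → γ 1 = b → ∃ t, m ≤ G (γ t)) :
    ∃ C, ∀ ε > 0, ∃ y ∈ {y | m ≤ G y ∧ G y ≤ C}, ‖G' y‖ ≤ ε := by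
  have hGc := continuous_of_gateaux hG hG'
  set I : C(unitInterval, X) → ℝ := fun γ => ⨆ t, G (γ t) with hI
  have hbdd : ∀ γ : C(unitInterval, X), BddAbove (range fun t => G (γ t)) := fun γ =>
    (isCompact_range (hGc.comp γ.continuous)).bddAbove
  have hle : ∀ (γ : C(unitInterval, X)) t, G (γ t) ≤ I γ := fun γ t => le_ciSup (hbdd γ) t
  have hattain : ∀ γ : C(unitInterval, X), ∃ t, G (γ t) = I γ := by
    intro γ
    have := (isCompact_range (hGc.comp γ.continuous)).sSup_mem (range_nonempty _)
    exact this
  have hIlsc : LowerSemicontinuous I := lowerSemicontinuous_ciSup hbdd fun t =>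
    (hGc.comp (continuous_eval_const t)).lowerSemicontinuous
  set P : Set C(unitInterval, X) := {γ | γ 0 = a ∧ γ 1 = b} with hP
  have hPclosed : IsClosed P :=
    (isClosed_eq (continuous_eval_const _) continuous_const).inter
      (isClosed_eq (continuous_eval_const _) continuous_const)
  have hIm : ∀ γ ∈ P, m ≤ I γ := fun γ hγ =>
    let ⟨t, ht⟩ := hpath γ hγ.1 hγ.2
    ht.trans (hle γ t)
  let γ₀ : C(unitInterval, X) := ⟨fun t => a + (t : ℝ) • (b - a), by fun_prop⟩
  have hγ₀ : γ₀ ∈ P := ⟨by simp [γ₀], by simp [γ₀]⟩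
  refine ⟨I γ₀, fun ε hε => ?_⟩
  obtain ⟨γ, hγ, hγI, hmin⟩ := ekeland_principle hPclosed hIlsc hIm hε hγ₀
  by_contra! hcon
  have hbig : ∀ t, G (γ t) = I γ → ε < ‖G' (γ t)‖ := fun t ht =>
    hcon _ ⟨ht ▸ hIm γ hγ, ht ▸ hγI⟩
  have hend0 : G (γ 0) ≠ I γ := by have := hIm γ hγ; rw [hγ.1]; linarith
  have hend1 : G (γ 1) ≠ I γ := by have := hIm γ hγ; rw [hγ.2]; linarith
  -- The direction field descends at the maximum points and vanishes at the ends of the path. The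
  -- admissible directions form convex sets with locally constant selections, so a partition of
  -- unity glues them.
  obtain ⟨v, hv⟩ : ∃ v : C(unitInterval, X), ∀ t, v t ∈ {w : X | ‖w‖ ≤ 1 ∧
      (G (γ t) = I γ → G' (γ t) w < -ε) ∧ (t = 0 ∨ t = 1 → w = 0)} := by
    refine exists_continuous_forall_mem_convex_of_local_const (fun t => ?_) (fun t => ?_)
    · rintro x ⟨hx1, hx2, hx3⟩ y ⟨hy1, hy2, hy3⟩ p q hp hq hpq
      refine ⟨?_, fun ht => ?_, fun ht => by rw [hx3 ht, hy3 ht]; simp⟩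
      · have := convex_closedBall (0 : X) 1 (mem_closedBall_zero_iff.2 hx1)
          (mem_closedBall_zero_iff.2 hy1) hp hq hpq
        exact mem_closedBall_zero_iff.1 this
      · exact (convex_halfSpace_lt (G' (γ t)).toLinearMap.isLinear (-ε)) (hx2 ht) (hy2 ht) hp hq hpq
    · by_cases ht : G (γ t) = I γ
      · obtain ⟨x, hx1, hx2⟩ : ∃ x, ‖x‖ ≤ 1 ∧ ε < ‖G' (γ t) x‖ := by
          by_contra! hx
          refine (hbig t ht).not_ge (ContinuousLinearMap.opNorm_le_of_unit_norm hε.le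
            fun x hx1 => hx x hx1.le)
        obtain ⟨w, hw1, hw2⟩ : ∃ w, ‖w‖ ≤ 1 ∧ G' (γ t) w < -ε := by
          rcases lt_abs.1 hx2 with h | h
          · exact ⟨-x, by simpa using hx1, by simpa using h⟩
          · exact ⟨x, hx1, by linarith⟩
        refine ⟨w, ?_⟩
        have hcont : Continuous fun s => G' (γ s) w := by fun_prop
        have hne0 : t ≠ 0 := fun h => hend0 (h ▸ ht)
        have hne1 : t ≠ 1 := fun h => hend1 (h ▸ ht)
        filter_upwards [hcont.continuousAt.eventually_lt continuousAt_const hw2,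
          isOpen_ne.mem_nhds hne0, isOpen_ne.mem_nhds hne1] with s hs h0 h1
        exact ⟨hw1, fun _ => hs, fun h => (h.elim h0 h1).elim⟩
      · refine ⟨0, ?_⟩
        have hcont : Continuous fun s => G (γ s) := by fun_prop
        filter_upwards [hcont.continuousAt.eventually_ne ht] with s hs
        exact ⟨by simp, fun h => (hs h).elim, fun _ => rfl⟩
  -- The decrease is uniform in `t`: by the mean value theorem near maximum points, by continuity
  -- elsewhere, and by compactness of the unit interval.
  have hdec : ∀ᶠ h : ℝ in 𝓝 0, ∀ t ∈ (univ : Set unitInterval),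
      0 < h → G (γ t + h • v t) < I γ - ε * h := by
    refine isCompact_univ.eventually_forall_of_forall_eventually fun t _ => ?_
    by_cases ht : G (γ t) = I γ
    · have hcont : Continuous fun z : ℝ × unitInterval => G' (γ z.2 + z.1 • v z.2) (v z.2) := by
        fun_prop
      have hev : ∀ᶠ z : ℝ × unitInterval in 𝓝 (0, t), G' (γ z.2 + z.1 • v z.2) (v z.2) < -ε :=
        hcont.continuousAt.eventually_lt continuousAt_const (by simpa using (hv t).2.1 ht)
      obtain ⟨δ, hδ, hball⟩ := Metric.eventually_nhds_iff.1 hev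
      refine Metric.eventually_nhds_iff.2 ⟨δ, hδ, ?_⟩
      rintro ⟨h, s⟩ hz hpos
      simp only at hpos ⊢
      rw [Prod.dist_eq, max_lt_iff] at hz
      have hd := hasDerivAt_along_line hG (γ s) (v s)
      obtain ⟨τ, hτ, hslope⟩ := exists_hasDerivAt_eq_slope
        (fun q : ℝ => G (γ s + q • v s)) (fun q => G' (γ s + q • v s) (v s)) hpos
        (fun q _ => (hd q).continuousAt.continuousWithinAt) (fun q _ => hd q)
      have hlt : G' (γ s + τ • v s) (v s) < -ε := by
        refine @hball (τ, s) ?_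
        rw [Prod.dist_eq, max_lt_iff]
        refine ⟨?_, hz.2⟩
        have := hz.1
        simp only [Real.dist_eq, sub_zero, abs_of_pos hpos] at this
        simp only [Real.dist_eq, sub_zero, abs_of_pos hτ.1]
        exact hτ.2.trans this
      rw [hslope, div_lt_iff₀ (by linarith)] at hlt
      simp only [zero_smul, add_zero, sub_zero] at hlt
      linarith [hle γ s]
    · have hcont : Continuous fun z : ℝ × unitInterval => G (γ z.2 + z.1 • v z.2) := by fun_prop
      have hcont2 : Continuous fun z : ℝ × unitInterval => I γ - ε * z.1 := by fun_prop
      have hlt : G (γ t) < I γ := lt_of_le_of_ne (hle γ t) ht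
      filter_upwards [hcont.continuousAt.eventually_lt (hcont2.continuousAt (x := (0, t)))
        (by simpa using hlt)] with z hz _ using hz
  obtain ⟨h, hh, hpos⟩ := ((hdec.filter_mono nhdsWithin_le_nhds).and
    (self_mem_nhdsWithin (s := Ioi (0 : ℝ)))).exists
  have hpos : 0 < h := hpos
  have hη : γ + h • v ∈ P := by
    refine ⟨?_, ?_⟩
    · simp [(hv 0).2.2 (Or.inl rfl), hγ.1]
    · simp [(hv 1).2.2 (Or.inr rfl), hγ.2]
  have hdist : dist γ (γ + h • v) ≤ h := by
    rw [dist_self_add_right, ContinuousMap.norm_le _ hpos.le]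
    intro t
    rw [ContinuousMap.smul_apply, norm_smul, Real.norm_eq_abs, abs_of_pos hpos]
    nlinarith [(hv t).1]
  obtain ⟨t, ht⟩ := hattain (γ + h • v)
  have h1 := hmin _ hη
  have h2 := hh t (mem_univ t) hpos
  rw [← ht] at h1
  simp only [ContinuousMap.add_apply, ContinuousMap.smul_apply] at h1
  nlinarith

end Gateaux

/-! ### The three critical points -/

/-- Bonanno–Marano three critical points theorem. Let `X` be a Banach space in which
every bounded sequence has a weakly convergent subsequence (reflexivity). Let
`Φ, Ψ : X → ℝ` have continuous Gâteaux derivatives `Φ', Ψ' : X → X*`, with `Φ`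
coercive and sequentially weakly lower semicontinuous, `Φ'` invertible with
continuous inverse, `Ψ'` compact, `inf Φ = Φ 0 = Ψ 0 = 0`. If there are `r > 0`
and `xb` with `r < Φ xb` and `sup_{Φ ≤ r} Ψ / r < Ψ xb / Φ xb`, and `Φ - λΨ` is
coercive for each `λ ∈ Λ_r = (Φ xb / Ψ xb, r / sup_{Φ ≤ r} Ψ)`, then for each
`λ ∈ Λ_r` the functional `Φ - λΨ` has at least three distinct critical points. -/
theorem bonanno_marano_three_critical_points
    {X : Type*} [NormedAddCommGroup X] [NormedSpace ℝ X] [CompleteSpace X]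
    (hrefl : ∀ x : ℕ → X, (∃ C : ℝ, ∀ n, ‖x n‖ ≤ C) →
      ∃ φ : ℕ → ℕ, StrictMono φ ∧ ∃ x₀ : X,
        ∀ f : X →L[ℝ] ℝ, Tendsto (fun k => f (x (φ k))) atTop (nhds (f x₀)))
    (Φ Ψ : X → ℝ) (Φ' Ψ' : X → X →L[ℝ] ℝ)
    (hΦ'cont : Continuous Φ') (hΨ'cont : Continuous Ψ')
    (hΦgateaux : ∀ u v : X,
      Tendsto (fun t : ℝ => (Φ (u + t • v) - Φ u) / t) (nhdsWithin 0 {(0:ℝ)}ᶜ)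
        (nhds (Φ' u v)))
    (hΨgateaux : ∀ u v : X,
      Tendsto (fun t : ℝ => (Ψ (u + t • v) - Ψ u) / t) (nhdsWithin 0 {(0:ℝ)}ᶜ)
        (nhds (Ψ' u v)))
    (hΦcoercive : Tendsto Φ (cobounded X) atTop)
    (hΦswlsc : ∀ (u : ℕ → X) (u₀ : X),
      (∀ f : X →L[ℝ] ℝ, Tendsto (fun n => f (u n)) atTop (nhds (f u₀))) →
      Φ u₀ ≤ atTop.liminf (fun n => Φ (u n)))
    (hΦ'inv : ∃ g : (X →L[ℝ] ℝ) → X, Continuous g ∧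
      Function.LeftInverse g Φ' ∧ Function.RightInverse g Φ')
    (hΨ'compact : ∀ B : Set X, IsBounded B → IsCompact (closure (Ψ' '' B)))
    (hΦinf : ∀ u : X, Φ 0 ≤ Φ u) (hΦ0 : Φ 0 = 0) (hΨ0 : Ψ 0 = 0)
    (r : ℝ) (xb : X) (hr : 0 < r) (hrΦ : r < Φ xb)
    (hineq : sSup (Ψ '' {x | Φ x ≤ r}) / r < Ψ xb / Φ xb)
    (hcoercive_lam : ∀ lam ∈ Set.Ioo (Φ xb / Ψ xb) (r / sSup (Ψ '' {x | Φ x ≤ r})),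
      Tendsto (fun u => Φ u - lam * Ψ u) (cobounded X) atTop) :
    ∀ lam ∈ Set.Ioo (Φ xb / Ψ xb) (r / sSup (Ψ '' {x | Φ x ≤ r})),
      ∃ u₁ u₂ u₃ : X, u₁ ≠ u₂ ∧ u₁ ≠ u₃ ∧ u₂ ≠ u₃ ∧
        Φ' u₁ = lam • Ψ' u₁ ∧ Φ' u₂ = lam • Ψ' u₂ ∧ Φ' u₃ = lam • Ψ' u₃ := by
  intro lam hlam
  obtain ⟨g, hgc, hgl, -⟩ := hΦ'inv
  have hΦline : ∀ u v, HasLineDerivAt ℝ Φ (Φ' u v) u v := fun u v => by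
    rw [HasLineDerivAt, hasDerivAt_iff_tendsto_slope_zero]
    simpa [div_eq_inv_mul] using hΦgateaux u v
  have hΨline : ∀ u v, HasLineDerivAt ℝ Ψ (Ψ' u v) u v := fun u v => by
    rw [HasLineDerivAt, hasDerivAt_iff_tendsto_slope_zero]
    simpa [div_eq_inv_mul] using hΨgateaux u v
  have hΦc : Continuous Φ := continuous_of_gateaux hΦline hΦ'cont
  have hΨbdd : ∀ B : Set X, IsBounded B → ∃ C, ∀ x ∈ B, Ψ x ≤ C := by
    intro B hB
    obtain ⟨R, hR⟩ := (Metric.isBounded_iff_subset_closedBall 0).1 hB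
    obtain ⟨D, hD⟩ := ((hΨ'compact _
      (Metric.isBounded_closedBall (x := (0 : X)) (r := max R 0))).isBounded).exists_norm_le
    refine ⟨D * max R 0, fun x hx => ?_⟩
    have hx' : x ∈ Metric.closedBall (0 : X) (max R 0) :=
      Metric.closedBall_subset_closedBall (le_max_left _ _) (hR hx)
    have h0 : (0 : X) ∈ Metric.closedBall (0 : X) (max R 0) := by simp
    have hD' : ∀ y ∈ Metric.closedBall (0 : X) (max R 0), ‖Ψ' y‖ ≤ D := fun y hy =>
      hD _ (subset_closure (mem_image_of_mem _ hy))
    have h := abs_sub_le_of_gateaux_bound hΨline (convex_closedBall (0 : X) (max R 0)) hD' h0 hx'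
    rw [hΨ0, sub_zero, sub_zero] at h
    exact ((le_abs_self _).trans h).trans (mul_le_mul_of_nonneg_left
      (mem_closedBall_zero_iff.1 hx') ((norm_nonneg _).trans (hD' 0 h0)))
  have hsub : ∀ (F : X → ℝ), Tendsto F (cobounded X) atTop → ∀ b, IsBounded {x | F x ≤ b} := by
    intro F hF b
    rw [isBounded_def]
    filter_upwards [hF.eventually (eventually_gt_atTop b)] with x hx
    exact not_le.2 hx
  set S := sSup (Ψ '' {x | Φ x ≤ r}) with hSdef
  have hSle : ∀ x, Φ x ≤ r → Ψ x ≤ S := by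
    intro x hx
    obtain ⟨C, hC⟩ := hΨbdd _ (hsub Φ hΦcoercive r)
    exact le_csSup ⟨C, by rintro _ ⟨y, hy, rfl⟩; exact hC y hy⟩ (mem_image_of_mem Ψ hx)
  have hS0 : 0 ≤ S := hΨ0 ▸ hSle 0 (hΦ0 ▸ hr.le)
  have hΦxb : 0 < Φ xb := hr.trans hrΦ
  have hΨxb : 0 < Ψ xb := by
    have : 0 < Ψ xb / Φ xb := (div_nonneg hS0 hr.le).trans_lt hineq
    exact (div_pos_iff_of_pos_right hΦxb).1 this
  have hlam0 : 0 < lam := (div_pos hΦxb hΨxb).trans hlam.1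
  have hSpos : 0 < S := by
    -- if `S = 0` then `r / S = 0`, and the interval of admissible parameters is empty
    refine lt_of_le_of_ne hS0 fun h => ?_
    have := hlam.2
    rw [← h, div_zero] at this
    linarith
  have hlamS : lam * S < r := (lt_div_iff₀ hSpos).1 hlam.2
  have hJxb : Φ xb - lam * Ψ xb < 0 := by
    have := (div_lt_iff₀ hΨxb).1 hlam.1
    linarith
  have hcoer := hcoercive_lam lam hlam
  set J : X → ℝ := fun u => Φ u - lam * Ψ u with hJ
  set J' : X → X →L[ℝ] ℝ := fun u => Φ' u - lam • Ψ' u with hJ'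
  have hJdc : Continuous J' := hΦ'cont.sub (hΨ'cont.const_smul lam)
  have hJline : ∀ u v, HasLineDerivAt ℝ J (J' u v) u v := fun u v =>
    HasDerivAt.sub (hΦline u v) (HasDerivAt.const_mul lam (hΨline u v))
  have hJc : Continuous J := continuous_of_gateaux hJline hJdc
  -- `J` is bounded below: it is nonnegative off a bounded set, on which `Ψ` is bounded above.
  obtain ⟨c, hc⟩ : ∃ c, ∀ x, c ≤ J x := by
    obtain ⟨C, hC⟩ := hΨbdd _ (hsub J hcoer 0)
    refine ⟨min 0 (-(lam * C)), fun x => ?_⟩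
    by_cases hx : J x ≤ 0
    · refine (min_le_right _ _).trans ?_
      have h1 := mul_le_mul_of_nonneg_left (hC x hx) hlam0.le
      have h2 := hΦinf x
      simp only [hJ]
      linarith
    · exact (min_le_left _ _).trans (not_le.1 hx).le
  -- The Palais–Smale condition: along a subsequence `Ψ' (y n)` converges by compactness, hence so
  -- does `Φ' (y n) = J' (y n) + lam • Ψ' (y n)`, hence so does `y n = g (Φ' (y n))`.
  have hPS : ∀ (K : Set X) (b : ℝ), IsClosed K → (∀ x ∈ K, J x ≤ b) →
      (∀ ε > 0, ∃ y ∈ K, ‖J' y‖ ≤ ε) → ∃ u ∈ K, J' u = 0 := by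
    intro K b hK hKb hcrit
    choose y hyK hy using fun n : ℕ => hcrit (1 / ((n : ℝ) + 1)) (by positivity)
    obtain ⟨f, -, φ, hφ, hf⟩ := (hΨ'compact _ (hsub J hcoer b)).tendsto_subseq
      (x := fun n => Ψ' (y n)) (fun n => subset_closure (mem_image_of_mem _ (hKb _ (hyK n))))
    have hJd0 : Tendsto (fun n => J' (y (φ n))) atTop (𝓝 0) :=
      (squeeze_zero_norm hy tendsto_one_div_add_atTop_nhds_zero_nat).comp hφ.tendsto_atTop
    have hΦ'lim : Tendsto (fun n => Φ' (y (φ n))) atTop (𝓝 (lam • f)) := by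
      have := hJd0.add (hf.const_smul lam)
      simpa [hJ'] using this
    have hylim : Tendsto (fun n => y (φ n)) atTop (𝓝 (g (lam • f))) := by
      have := (hgc.tendsto _).comp hΦ'lim
      simpa [Function.comp_def, hgl _] using this
    exact ⟨_, hK.mem_of_tendsto hylim (Eventually.of_forall fun n => hyK _),
      tendsto_nhds_unique ((hJdc.tendsto _).comp hylim) hJd0⟩
  -- On the level set `Φ = r` the functional `J` is at least `r - lam * S > 0`.
  have hbarrier : ∀ x, Φ x = r → r - lam * S ≤ J x := by
    intro x hx
    have := mul_le_mul_of_nonneg_left (hSle x hx.le) hlam0.le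
    simp only [hJ, hx]
    linarith
  have hJ0 : J 0 = 0 := by simp [hJ, hΦ0, hΨ0]
  have hne : ∀ x, J x ≤ 0 → Φ x ≠ r := fun x hx h => by
    have := hbarrier x h
    linarith
  obtain ⟨u₁, ⟨hu₁r, hu₁J⟩, hu₁⟩ := hPS ({x | Φ x ≤ r} ∩ {x | J x ≤ J 0}) (J 0)
    ((isClosed_le hΦc continuous_const).inter (isClosed_le hJc continuous_const))
    (fun x hx => hx.2) (fun ε hε => exists_almost_critical_of_barrier hJline hJdc
      (isClosed_le hΦc continuous_const) (fun x _ => hc x) (by simpa [hΦ0] using hr.le)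
      (fun x hx hxJ => mem_of_superset ((isOpen_lt hΦc continuous_const).mem_nhds
        (lt_of_le_of_ne hx (hne x (hJ0 ▸ hxJ)))) fun z (hz : Φ z < r) => hz.le) hε)
  obtain ⟨u₂, ⟨hu₂r, hu₂J⟩, hu₂⟩ := hPS ({x | r ≤ Φ x} ∩ {x | J x ≤ J xb}) (J xb)
    ((isClosed_le continuous_const hΦc).inter (isClosed_le hJc continuous_const))
    (fun x hx => hx.2) (fun ε hε => exists_almost_critical_of_barrier hJline hJdc
      (isClosed_le continuous_const hΦc) (fun x _ => hc x) hrΦ.le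
      (fun x hx hxJ => mem_of_superset ((isOpen_lt continuous_const hΦc).mem_nhds
        (lt_of_le_of_ne hx (hne x (hxJ.trans hJxb.le)).symm)) fun z (hz : r < Φ z) => hz.le) hε)
  obtain ⟨C, hC⟩ := exists_almost_critical_of_pass hJline hJdc (a := 0) (b := xb)
    (m := r - lam * S) (by linarith) (by simp only [hJ]; linarith) (by
      intro γ h0 h1
      have hcont : Continuous fun t => Φ (γ t) := by fun_prop
      obtain ⟨t, ht⟩ := mem_range_of_exists_le_of_exists_ge (c := r) hcont
        ⟨0, by rw [h0, hΦ0]; exact hr.le⟩ ⟨1, by rw [h1]; exact hrΦ.le⟩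
      exact ⟨t, hbarrier _ ht⟩)
  obtain ⟨u₃, ⟨hu₃J, -⟩, hu₃⟩ := hPS {x | r - lam * S ≤ J x ∧ J x ≤ C} C
    ((isClosed_le continuous_const hJc).inter (isClosed_le hJc continuous_const))
    (fun x hx => hx.2) hC
  simp only [mem_ofPred_eq] at hu₁r hu₁J hu₂r hu₂J
  have hu₁J0 : J u₁ ≤ 0 := hJ0 ▸ hu₁J
  have hu₂J0 : J u₂ ≤ 0 := hu₂J.trans hJxb.le
  refine ⟨u₁, u₂, u₃, ?_, ?_, ?_, sub_eq_zero.1 hu₁, sub_eq_zero.1 hu₂, sub_eq_zero.1 hu₃⟩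
  · rintro rfl
    exact hne _ hu₁J0 (le_antisymm hu₁r hu₂r)
  · rintro rfl
    linarith
  · rintro rfl
    linarith
end
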